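/- Let G be a group and 𝓕 a family of subgroups of G closed under conjugation and containing only finitely many subgroups of each fixed index. For an integer n ≥ 1, let I_n be the number of conjugacy classes of subgroups H ∈ 𝓕 of index n in G, and for a finite group Q let T_n(Q) be the number of pairs (H, J) with H ∈ 𝓕 of index n in G, H ≤ J ≤ G, H normal in J, and J/H ≅ Q. Then I_n = (1/n) · Σ_{d | n} φ(d) · T_n(C_d), where C_d is the cyclic group of order d and φ is Euler's totient function. -/

import Mathlib

/-!
Let `W(H) = N_G(H) / H`. The conjugacy class of a subgroup `H` of index `n` has `(G : N_G(H))`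
elements, so each of its members `K` satisfies `|W(K)| = n / |class|` and the numbers `|W(K)|` add
up to `n` over the class. Hence `n * I = ∑ |W(H)|`, the sum being over all `H ∈ F` of index `n`.

Sorting the elements of `W(H)` by the cyclic subgroup they generate gives
`|W(H)| = ∑ φ(d) * #{C ≤ W(H) | C ≅ C_d}`, and by the correspondence theorem these `C` are the
quotients `J / H` with `H ⊴ J ≤ G` and `J / H ≅ C_d`. Exchanging the two sums gives the formula.
-/

open scoped Pointwise

section Counting

variable {α β : Type*}

lemma sum_eq_card_image_mul [DecidableEq β] (s : Finset α) (f : α → β) (w : α → ℕ) {n : ℕ}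
    (hw : ∀ a ∈ s, w a * (s.filter fun b ↦ f b = f a).card = n) :
    ∑ a ∈ s, w a = (s.image f).card * n := by
  rw [← Finset.sum_fiberwise_of_maps_to fun a ha ↦ Finset.mem_image_of_mem f ha]
  refine Finset.sum_const_nat fun b hb ↦ ?_
  obtain ⟨a, ha, rfl⟩ := Finset.mem_image.1 hb
  have fiber_pos : 0 < (s.filter fun b ↦ f b = f a).card :=
    Finset.card_pos.2 ⟨a, Finset.mem_filter.2 ⟨ha, rfl⟩⟩
  refine Nat.eq_of_mul_eq_mul_right fiber_pos ?_
  rw [Finset.sum_mul, mul_comm n]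
  refine Finset.sum_const_nat fun c hc ↦ ?_
  obtain ⟨hcs, hca⟩ := Finset.mem_filter.1 hc
  rw [← hca, hw c hcs]

lemma natCard_setOf_fst_mem_and (s : Finset α) (r : α → β → Prop)
    (hr : ∀ a ∈ s, Finite {b // r a b}) :
    Nat.card {p : α × β | p.1 ∈ s ∧ r p.1 p.2} = ∑ a ∈ s, Nat.card {b // r a b} := by
  have (a : s) : Finite {b // r a b} := hr a a.2
  rw [← Finset.sum_coe_sort s fun a ↦ Nat.card {b // r a b}, ← Nat.card_sigma]
  exact Nat.card_congr
    { toFun p := ⟨⟨p.1.1, p.2.1⟩, p.1.2, p.2.2⟩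
      invFun q := ⟨(q.1, q.2), q.1.2, q.2.2⟩ }

end Counting

section Orbits

variable {G : Type*} [Group G]

lemma mul_ncard_image_orbit {α : Type*} [MulAction G α] (s : Finset α) (w : α → ℕ) {n : ℕ}
    (hs : ∀ a ∈ s, MulAction.orbit G a ⊆ s)
    (hw : ∀ a ∈ s, w a * (MulAction.stabilizer G a).index = n) :
    n * (MulAction.orbit G '' (s : Set α)).ncard = ∑ a ∈ s, w a := by
  classical
  rw [← Finset.coe_image, Set.ncard_coe_finset, mul_comm,
    sum_eq_card_image_mul s (MulAction.orbit G) w]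
  intro a ha
  have fiber_eq : (s.filter fun b ↦ MulAction.orbit G b = MulAction.orbit G a : Set α) =
      MulAction.orbit G a := by
    ext b
    simpa only [Finset.coe_filter, Set.mem_ofPred_eq, MulAction.orbit_eq_iff,
      and_iff_right_iff_imp, Finset.mem_coe] using @hs a ha b
  rw [← Set.ncard_coe_finset, fiber_eq, ← MulAction.index_stabilizer, hw a ha]

lemma orbit_conjAct_subgroup (H : Subgroup G) :
    MulAction.orbit (ConjAct G) H = {K | ∃ g : G, K = H.map (MulAut.conj g).toMonoidHom} :=
  Set.ext fun _ ↦ exists_congr fun _ ↦ eq_comm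

lemma index_stabilizer_conjAct_subgroup (H : Subgroup G) :
    (MulAction.stabilizer (ConjAct G) H).index = (Subgroup.normalizer (H : Set G)).index := by
  have comap_stabilizer : (MulAction.stabilizer (ConjAct G) H).comap
      (ConjAct.toConjAct : G ≃* ConjAct G).toMonoidHom = Subgroup.normalizer (H : Set G) := by
    ext g
    rw [Subgroup.mem_normalizer_iff_map_conj_eq]
    rfl
  rw [← comap_stabilizer]
  exact (Subgroup.index_comap_of_surjective _ ConjAct.toConjAct.surjective).symm

end Orbits

section NormalizerQuotient

variable {G : Type*} [Group G]

/-- The quotient `N_G(H) / H`, often called the Weyl group of `H` in `G`. -/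
abbrev NormalizerQuotient (H : Subgroup G) : Type _ :=
  Subgroup.normalizer (H : Set G) ⧸ H.subgroupOf (Subgroup.normalizer (H : Set G))

lemma natCard_normalizerQuotient_mul_index (H : Subgroup G) :
    Nat.card (NormalizerQuotient H) * (Subgroup.normalizer (H : Set G)).index = H.index :=
  Subgroup.relIndex_mul_index Subgroup.le_normalizer

lemma mul_ncard_conjClasses_eq_sum_natCard (s : Finset (Subgroup G)) {n : ℕ}
    (hs : ∀ H ∈ s, MulAction.orbit (ConjAct G) H ⊆ s) (hindex : ∀ H ∈ s, H.index = n) :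
    n * (MulAction.orbit (ConjAct G) '' (s : Set (Subgroup G))).ncard =
      ∑ H ∈ s, Nat.card (NormalizerQuotient H) :=
  mul_ncard_image_orbit s _ hs fun H hH ↦ by
    rw [index_stabilizer_conjAct_subgroup, natCard_normalizerQuotient_mul_index, hindex H hH]

end NormalizerQuotient

section CyclicSubgroups

variable {Q : Type*} [Group Q]

lemma natCard_zpowers_eq (C : Subgroup Q) [Finite C] [IsCyclic C] :
    Nat.card {x : Q // Subgroup.zpowers x = C} = (Nat.card C).totient := by
  have := Fintype.ofFinite C
  rw [← IsCyclic.card_orderOf_eq_totient (Nat.card_eq_fintype_card (α := C)).dvd,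
    ← Fintype.card_subtype, ← Nat.card_eq_fintype_card]
  refine Nat.card_congr
    { toFun x := ⟨⟨x, x.2.le (Subgroup.mem_zpowers _)⟩, ?_⟩
      invFun x := ⟨x, Subgroup.eq_of_le_of_card_ge (Subgroup.zpowers_le.2 x.1.2) ?_⟩ }
  · rw [Subgroup.orderOf_mk, ← Nat.card_zpowers, x.2]
  · rw [Nat.card_zpowers, Subgroup.orderOf_coe, x.2]

lemma natCard_eq_sum_totient_natCard [Finite Q] [Fintype {C : Subgroup Q // IsCyclic C}] :
    Nat.card Q = ∑ C : {C : Subgroup Q // IsCyclic C}, (Nat.card C).totient := by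
  let generated (x : Q) : {C : Subgroup Q // IsCyclic C} := ⟨Subgroup.zpowers x, inferInstance⟩
  rw [← Nat.card_congr (Equiv.sigmaFiberEquiv generated), Nat.card_sigma]
  refine Finset.sum_congr rfl fun C _ ↦ ?_
  have := C.2
  rw [← natCard_zpowers_eq]
  exact Nat.card_congr (Equiv.subtypeEquivRight fun _ ↦ Subtype.ext_iff)

lemma nonempty_mulEquiv_zmod_iff {d : ℕ} :
    Nonempty (Q ≃* Multiplicative (ZMod d)) ↔ IsCyclic Q ∧ Nat.card Q = d := by
  constructor
  · rintro ⟨e⟩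
    exact ⟨e.isCyclic.2 inferInstance, (Nat.card_congr e.toEquiv).trans (Nat.card_zmod d)⟩
  · rintro ⟨_, rfl⟩
    exact ⟨(zmodCyclicMulEquiv ‹_›).symm⟩

lemma natCard_eq_sum_divisors_totient_mul {n : ℕ} (hn : n ≠ 0) (hQ : Nat.card Q ∣ n) :
    Nat.card Q = ∑ d ∈ n.divisors,
      d.totient * Nat.card {C : Subgroup Q // Nonempty (C ≃* Multiplicative (ZMod d))} := by
  classical
  have : Finite Q := Nat.finite_of_card_ne_zero (ne_zero_of_dvd_ne_zero hn hQ)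
  have := Fintype.ofFinite {C : Subgroup Q // IsCyclic C}
  have card_mem (C : {C : Subgroup Q // IsCyclic C}) : Nat.card C ∈ n.divisors :=
    Nat.mem_divisors.2 ⟨(Subgroup.card_subgroup_dvd_card C.1).trans hQ, hn⟩
  rw [natCard_eq_sum_totient_natCard, ← Finset.sum_fiberwise_of_maps_to fun C _ ↦ card_mem C]
  refine Finset.sum_congr rfl fun d _ ↦ ?_
  rw [Finset.sum_congr rfl fun C hC ↦ congrArg Nat.totient (Finset.mem_filter.1 hC).2,
    Finset.sum_const, smul_eq_mul, mul_comm, ← Fintype.card_subtype, ← Nat.card_eq_fintype_card]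
  simp_rw [nonempty_mulEquiv_zmod_iff]
  rw [Nat.card_congr (Equiv.subtypeSubtypeEquivSubtypeInter _ fun C : Subgroup Q ↦ Nat.card C = d)]

end CyclicSubgroups

section Extensions

variable {G Q : Type*} [Group G] [Group Q]

/-- `J` is an extension of `Q` by its subgroup `H`, i.e. `H ⊴ J` and `J / H ≅ Q`. The isomorphism is
encoded as a surjection `J →* Q` with kernel `H`, which also makes `H` normal in `J`. -/
def IsGroupExtension (H J : Subgroup G) (Q : Type*) [Group Q] : Prop :=
  H ≤ J ∧ ∃ φ : J →* Q, Function.Surjective φ ∧ φ.ker = H.subgroupOf J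

lemma IsGroupExtension.le_normalizer {H J : Subgroup G} (h : IsGroupExtension H J Q) :
    J ≤ Subgroup.normalizer (H : Set G) := by
  obtain ⟨hle, φ, -, hker⟩ := h
  rw [← Subgroup.normal_subgroupOf_iff_le_normalizer hle, ← hker]
  infer_instance

lemma exists_surjective_ker_eq_iff {A B : Type*} [Group A] [Group B] {ψ : A →* B}
    (hψ : Function.Surjective ψ) :
    (∃ φ : A →* Q, Function.Surjective φ ∧ φ.ker = ψ.ker) ↔ Nonempty (B ≃* Q) := by
  constructor
  · rintro ⟨φ, hφ, hker⟩
    exact ⟨(QuotientGroup.quotientKerEquivOfSurjective ψ hψ).symm.trans <|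
      (QuotientGroup.quotientMulEquivOfEq hker.symm).trans <|
        QuotientGroup.quotientKerEquivOfSurjective φ hφ⟩
  · rintro ⟨e⟩
    exact ⟨e.toMonoidHom.comp ψ, e.surjective.comp hψ, MonoidHom.ker_mulEquiv_comp ψ e⟩

lemma isGroupExtension_map_comap_iff {N W : Type*} [Group N] [Group W] {i : N →* G} {f : N →* W}
    (hi : Function.Injective i) (hf : Function.Surjective f) (C : Subgroup W) :
    IsGroupExtension (f.ker.map i) ((C.comap f).map i) Q ↔ Nonempty (C ≃* Q) := by
  let e := (C.comap f).equivMapOfInjective i hi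
  let ψ : (C.comap f).map i →* C := (f.subgroupComap C).comp e.symm.toMonoidHom
  have hψ : Function.Surjective ψ :=
    (f.subgroupComap_surjective_of_surjective C hf).comp e.symm.surjective
  have hker : ψ.ker = (f.ker.map i).subgroupOf ((C.comap f).map i) := by
    ext x
    obtain ⟨y, rfl⟩ := e.surjective x
    have : ψ (e y) = f.subgroupComap C y := congrArg (f.subgroupComap C) (e.symm_apply_apply y)
    rw [MonoidHom.mem_ker, this, Subgroup.mem_subgroupOf, Subgroup.coe_equivMapOfInjective_apply,
      Subgroup.mem_map_iff_mem hi, MonoidHom.mem_ker, Subtype.ext_iff]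
    rfl
  rw [IsGroupExtension, ← hker, exists_surjective_ker_eq_iff hψ,
    and_iff_right (Subgroup.map_mono (f.ker_le_comap C))]

/-- The preimage in `G` of a subgroup of `N_G(H) / H`: the correspondence theorem, with the result
regarded as a subgroup of `G` rather than of `N_G(H)`. -/
def NormalizerQuotient.preimage {H : Subgroup G} (C : Subgroup (NormalizerQuotient H)) :
    Subgroup G :=
  (C.comap (QuotientGroup.mk' _)).map (Subgroup.normalizer (H : Set G)).subtype

namespace NormalizerQuotient

variable {H : Subgroup G}

lemma preimage_injective : Function.Injective (preimage (H := H)) :=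
  (Subgroup.map_injective (Subgroup.subtype_injective _)).comp
    (Subgroup.comap_injective (QuotientGroup.mk'_surjective _))

lemma isGroupExtension_preimage_iff (C : Subgroup (NormalizerQuotient H)) :
    IsGroupExtension H (preimage C) Q ↔ Nonempty (C ≃* Q) := by
  rw [← isGroupExtension_map_comap_iff (Subgroup.subtype_injective _)
      (QuotientGroup.mk'_surjective _) C, QuotientGroup.ker_mk',
    Subgroup.map_subgroupOf_eq_of_le Subgroup.le_normalizer, preimage]

lemma exists_preimage_eq {J : Subgroup G} (hHJ : H ≤ J)
    (hJ : J ≤ Subgroup.normalizer (H : Set G)) :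
    ∃ C : Subgroup (NormalizerQuotient H), preimage C = J := by
  refine ⟨(J.subgroupOf _).map (QuotientGroup.mk' _), ?_⟩
  rw [preimage, Subgroup.comap_map_eq_self, Subgroup.map_subgroupOf_eq_of_le hJ]
  rw [QuotientGroup.ker_mk']
  exact Subgroup.comap_mono hHJ

lemma preimage_image_setOf_mulEquiv :
    preimage '' {C : Subgroup (NormalizerQuotient H) | Nonempty (C ≃* Q)} =
      {J | IsGroupExtension H J Q} := by
  ext J
  constructor
  · rintro ⟨C, hC, rfl⟩
    exact (isGroupExtension_preimage_iff C).2 hC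
  · intro hJ
    obtain ⟨C, rfl⟩ := exists_preimage_eq hJ.1 hJ.le_normalizer
    exact ⟨C, (isGroupExtension_preimage_iff C).1 hJ, rfl⟩

end NormalizerQuotient

variable (H : Subgroup G) (Q)

lemma natCard_isGroupExtension :
    Nat.card {J // IsGroupExtension H J Q} =
      Nat.card {C : Subgroup (NormalizerQuotient H) // Nonempty (C ≃* Q)} := by
  have := Nat.card_image_of_injective (NormalizerQuotient.preimage_injective (H := H))
    {C | Nonempty (C ≃* Q)}
  rwa [NormalizerQuotient.preimage_image_setOf_mulEquiv] at this

lemma finite_isGroupExtension [H.FiniteIndex] : Finite {J // IsGroupExtension H J Q} := by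
  have := (Set.toFinite {C : Subgroup (NormalizerQuotient H) | Nonempty (C ≃* Q)}).image
    NormalizerQuotient.preimage
  rwa [NormalizerQuotient.preimage_image_setOf_mulEquiv] at this

lemma natCard_normalizerQuotient_eq_sum_totient_mul [hH : H.FiniteIndex] :
    Nat.card (NormalizerQuotient H) = ∑ d ∈ H.index.divisors,
      d.totient * Nat.card {J // IsGroupExtension H J (Multiplicative (ZMod d))} := by
  simp_rw [natCard_isGroupExtension]
  exact natCard_eq_sum_divisors_totient_mul hH.index_ne_zero
    (Dvd.intro _ (natCard_normalizerQuotient_mul_index H))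

lemma natCard_setOf_isGroupExtension {s : Finset (Subgroup G)} (hs : ∀ H ∈ s, H.FiniteIndex) :
    Nat.card {p : Subgroup G × Subgroup G | p.1 ∈ s ∧ IsGroupExtension p.1 p.2 Q} =
      ∑ H ∈ s, Nat.card {J // IsGroupExtension H J Q} :=
  natCard_setOf_fst_mem_and s _ fun H hH ↦
    have := hs H hH
    finite_isGroupExtension Q H

lemma mul_ncard_conjClasses_eq_sum_totient_mul {s : Finset (Subgroup G)} {n : ℕ} (hn : n ≠ 0)
    (hs : ∀ H ∈ s, MulAction.orbit (ConjAct G) H ⊆ s) (hindex : ∀ H ∈ s, H.index = n) :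
    n * (MulAction.orbit (ConjAct G) '' (s : Set (Subgroup G))).ncard =
      ∑ d ∈ n.divisors, d.totient * Nat.card {p : Subgroup G × Subgroup G |
        p.1 ∈ s ∧ IsGroupExtension p.1 p.2 (Multiplicative (ZMod d))} := by
  have finiteIndex : ∀ H ∈ s, H.FiniteIndex := fun H hH ↦ ⟨by rwa [hindex H hH]⟩
  simp_rw [natCard_setOf_isGroupExtension _ finiteIndex, Finset.mul_sum]
  rw [mul_ncard_conjClasses_eq_sum_natCard s hs hindex, Finset.sum_comm]
  refine Finset.sum_congr rfl fun H hH ↦ ?_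
  have := finiteIndex H hH
  rw [natCard_normalizerQuotient_eq_sum_totient_mul, hindex H hH]

end Extensions

/-- For a group `G` and a conjugation-closed family `F` of subgroups with
finitely many members of each index, the number `I` of conjugacy classes of members of `F`
of index `n` satisfies `n * I = ∑_{d ∣ n} φ(d) * T d`, where `T d` counts pairs
`H ⊴ J ≤ G` with `H ∈ F` of index `n` in `G` and `J/H ≅ C_d` (encoded as: there is a
surjective homomorphism `J →* C_d` with kernel `H`). -/
theorem stmt_0 {G : Type*} [Group G] (F : Set (Subgroup G))
    (hconj : ∀ H ∈ F, ∀ g : G, H.map (MulAut.conj g).toMonoidHom ∈ F)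
    (hfin : ∀ m : ℕ, {H : Subgroup G | H ∈ F ∧ H.index = m}.Finite)
    (n : ℕ) (hn : 1 ≤ n)
    (I : ℕ)
    (hI : I = Nat.card {S : Set (Subgroup G) | ∃ H, H ∈ F ∧ H.index = n ∧
      S = {K | ∃ g : G, K = H.map (MulAut.conj g).toMonoidHom}})
    (T : ℕ → ℕ)
    (hT : ∀ d : ℕ, T d = Nat.card {HJ : Subgroup G × Subgroup G |
      HJ.1 ∈ F ∧ HJ.1.index = n ∧ HJ.1 ≤ HJ.2 ∧
      ∃ φ : HJ.2 →* Multiplicative (ZMod d),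
        Function.Surjective φ ∧ φ.ker = HJ.1.subgroupOf HJ.2}) :
    n * I = ∑ d ∈ n.divisors, d.totient * T d := by
  let X : Finset (Subgroup G) := (hfin n).toFinset
  have mem_X {H : Subgroup G} : H ∈ X ↔ H ∈ F ∧ H.index = n := Set.Finite.mem_toFinset _
  have orbit_subset : ∀ H ∈ X, MulAction.orbit (ConjAct G) H ⊆ X := by
    rintro H hH _ ⟨g, rfl⟩
    exact mem_X.2 ⟨hconj H (mem_X.1 hH).1 g,
      (Subgroup.index_map_equiv H (MulAut.conj g)).trans (mem_X.1 hH).2⟩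
  have I_eq : I = (MulAction.orbit (ConjAct G) '' (X : Set (Subgroup G))).ncard := by
    rw [hI, ← Nat.card_coe_set_eq]
    simp only [Set.image, Finset.mem_coe, mem_X, orbit_conjAct_subgroup, and_assoc, eq_comm]
  have T_eq (d : ℕ) : T d = Nat.card {p : Subgroup G × Subgroup G |
      p.1 ∈ X ∧ IsGroupExtension p.1 p.2 (Multiplicative (ZMod d))} := by
    simp only [hT, mem_X, and_assoc, IsGroupExtension]
  simp_rw [I_eq, T_eq]
  exact mul_ncard_conjClasses_eq_sum_totient_mul (Nat.one_le_iff_ne_zero.1 hn) orbit_subset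
    fun _ hH ↦ (mem_X.1 hH).2
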